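/- Let n : ℕ, τ, θ : Fin n → ℝ, set φ = τ + θ, and let C ∈ GL_n(ℂ). Then the following are equivalent: (a) C commutes with the diagonal matrix exp(2πi·diag(τ)) and the function t ↦ D(t) ⬝ C ⬝ D(t)⁻¹ (for t ∈ (0,∞), where D(t) is the diagonal matrix with entries t^(φ i)) converges to a limit as t → 0⁺; (b) for all indices i, j with C i j ≠ 0, one has τ i − τ j ∈ ℤ and φ i ≥ φ j. In particular, (a) holds if and only if C commutes with exp(2πi·diag(τ)) and C ∈ P_φ. -/

import Mathlib

open Filter Topology Real

/-- The parabolic subgroup `P_φ ⊆ GL_n(ℂ)` attached to `φ : Fin n → ℝ`. -/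
def parabolicSet (n : ℕ) (φ : Fin n → ℝ) : Set ((Matrix (Fin n) (Fin n) ℂ)ˣ) :=
  {g | ∀ i j, φ i < φ j → g.val i j = 0}

/-!
Both conditions are tested entry by entry. The commutator of `C` with `exp(2πi·diag(τ))` has
entries `(exp(2πi τ j) - exp(2πi τ i)) C i j`, so it vanishes exactly when `τ i - τ j ∈ ℤ` wherever
`C i j ≠ 0`. The entries `t ^ (φ i - φ j) C i j` converge as `t → 0⁺` exactly when no nonzero
`C i j` carries a negative exponent, which is membership in the parabolic.
-/

theorem mul_diagonal_eq_diagonal_mul_iff {m n R : Type*} [Fintype m] [DecidableEq m] [Fintype n]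
    [DecidableEq n] [NonUnitalCommSemiring R] [IsCancelMulZero R] {C : Matrix m n R} {d : m → R}
    {e : n → R} :
    C * Matrix.diagonal e = Matrix.diagonal d * C ↔ ∀ i j, C i j ≠ 0 → d i = e j := by
  simp only [← Matrix.ext_iff, Matrix.mul_diagonal, Matrix.diagonal_mul, mul_comm (C _ _),
    mul_eq_mul_right_iff, or_iff_not_imp_right, eq_comm (a := e _), ne_eq]

theorem exp_two_pi_I_mul_eq_iff {x y : ℂ} :
    Complex.exp (2 * π * Complex.I * x) = Complex.exp (2 * π * Complex.I * y) ↔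
      ∃ m : ℤ, x - y = m := by
  rw [Complex.exp_eq_exp_iff_exists_int]
  refine exists_congr fun m => ?_
  rw [mul_comm (m : ℂ), ← mul_add, mul_right_inj' Complex.two_pi_I_ne_zero, sub_eq_iff_eq_add']

theorem exists_tendsto_nhds_matrix_iff {α m n R : Type*} [TopologicalSpace R] {l : Filter α}
    {F : α → Matrix m n R} :
    (∃ L, Tendsto F l (𝓝 L)) ↔ ∀ i j, ∃ a, Tendsto (fun t => F t i j) l (𝓝 a) := by
  simp only [Classical.skolem]
  exact exists_congr fun _ => tendsto_pi_nhds.trans (forall_congr' fun _ => tendsto_pi_nhds)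

theorem exists_tendsto_rpow_smul_nhdsGT_zero_iff {V : Type*} [NormedAddCommGroup V]
    [NormedSpace ℝ V] {r : ℝ} {c : V} :
    (∃ a, Tendsto (fun t : ℝ => t ^ r • c) (𝓝[>] 0) (𝓝 a)) ↔ (c ≠ 0 → 0 ≤ r) := by
  constructor
  · rintro ⟨a, ha⟩ hc
    by_contra! hr
    have h_rpow : Tendsto (fun t : ℝ => t ^ r) (𝓝[>] 0) atTop := tendsto_rpow_neg_nhdsGT_zero hr
    have h_norm : Tendsto (fun t : ℝ => ‖t ^ r • c‖) (𝓝[>] 0) atTop := by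
      simp only [norm_smul]
      exact (tendsto_norm_atTop_atTop.comp h_rpow).atTop_mul_const (norm_pos_iff.2 hc)
    exact not_tendsto_nhds_of_tendsto_atTop h_norm _ ha.norm
  · intro hr
    rcases eq_or_ne c 0 with rfl | hc
    · exact ⟨0, by simp only [smul_zero, tendsto_const_nhds]⟩
    · have h_rpow : Continuous fun t : ℝ => t ^ r := Real.continuous_rpow_const (hr hc)
      exact ⟨_, ((h_rpow.tendsto 0).mono_left nhdsWithin_le_nhds).smul_const c⟩

theorem exists_tendsto_rpow_sub_smul_iff {m n V : Type*} [NormedAddCommGroup V] [NormedSpace ℝ V]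
    {C : Matrix m n V} {φ : m → ℝ} {ψ : n → ℝ} :
    (∃ L : Matrix m n V,
        Tendsto (fun t : ℝ => Matrix.of fun i j => t ^ (φ i - ψ j) • C i j) (𝓝[>] 0) (𝓝 L)) ↔
      ∀ i j, C i j ≠ 0 → ψ j ≤ φ i := by
  simp only [exists_tendsto_nhds_matrix_iff, Matrix.of_apply,
    exists_tendsto_rpow_smul_nhdsGT_zero_iff, sub_nonneg]

theorem mul_diagonal_exp_two_pi_I_comm_iff {ι : Type*} [Fintype ι] [DecidableEq ι]
    {C : Matrix ι ι ℂ} {τ : ι → ℝ} :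
    (C * Matrix.diagonal fun k => Complex.exp (2 * π * Complex.I * (τ k : ℂ))) =
        (Matrix.diagonal fun k => Complex.exp (2 * π * Complex.I * (τ k : ℂ))) * C ↔
      ∀ i j, C i j ≠ 0 → ∃ m : ℤ, τ i - τ j = (m : ℝ) := by
  simp only [mul_diagonal_eq_diagonal_mul_iff, exp_two_pi_I_mul_eq_iff]
  norm_cast

/-- The order dual turns Mathlib's upper triangular convention into that of `parabolicSet`. -/
theorem blockTriangular_toDual_iff {ι R α : Type*} [Zero R] [LinearOrder α] {C : Matrix ι ι R}
    {φ : ι → α} :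
    C.BlockTriangular (OrderDual.toDual ∘ φ) ↔ ∀ i j, C i j ≠ 0 → φ j ≤ φ i :=
  forall₂_congr fun _ _ => by
    rw [Function.comp_apply, Function.comp_apply, OrderDual.toDual_lt_toDual, ← not_le,
      not_imp_comm]

theorem parahoric_membership_criterion_general {ι : Type*} [Fintype ι] [DecidableEq ι]
    (τ φ : ι → ℝ) (E : Matrix ι ι ℂ)
    (hE : E = Matrix.diagonal fun k => Complex.exp (2 * π * Complex.I * (τ k : ℂ)))
    (C : Matrix ι ι ℂ) :
    ((C * E = E * C ∧
      ∃ L : Matrix ι ι ℂ,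
        Tendsto (fun t : ℝ => Matrix.of fun i j => ((t ^ (φ i - φ j) : ℝ) : ℂ) * C i j)
          (𝓝[>] 0) (𝓝 L)) ↔
      ∀ i j, C i j ≠ 0 → (∃ m : ℤ, τ i - τ j = (m : ℝ)) ∧ φ j ≤ φ i) ∧
    ((C * E = E * C ∧
      ∃ L : Matrix ι ι ℂ,
        Tendsto (fun t : ℝ => Matrix.of fun i j => ((t ^ (φ i - φ j) : ℝ) : ℂ) * C i j)
          (𝓝[>] 0) (𝓝 L)) ↔
      C * E = E * C ∧ C.BlockTriangular (OrderDual.toDual ∘ φ)) := by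
  subst hE
  simp only [← Complex.real_smul, exists_tendsto_rpow_sub_smul_iff, blockTriangular_toDual_iff,
    mul_diagonal_exp_two_pi_I_comm_iff]
  simp only [imp_and, forall_and, and_self]

/-- (Lemma 3.3 of the paper, for `GL_n(ℂ)`.) With `φ = τ + θ`:
`C` commutes with `exp(2πi·diag(τ))` and `t ↦ D(t) ⬝ C ⬝ D(t)⁻¹` (entries
`t^(φ i − φ j) · C i j`) has a limit as `t → 0⁺`, if and only if every nonzero entry
`C i j` has `τ i − τ j ∈ ℤ` and `φ i ≥ φ j`; equivalently, iff `C` commutes with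
`exp(2πi·diag(τ))` and `C ∈ P_φ`. -/
theorem parahoric_membership_criterion (n : ℕ) (τ θ : Fin n → ℝ)
    (φ : Fin n → ℝ) (hφ : φ = τ + θ)
    (E : Matrix (Fin n) (Fin n) ℂ)
    (hE : E = Matrix.diagonal fun k => Complex.exp (2 * π * Complex.I * (τ k : ℂ)))
    (C : (Matrix (Fin n) (Fin n) ℂ)ˣ) :
    ((C.val * E = E * C.val ∧
      ∃ L : Matrix (Fin n) (Fin n) ℂ,
        Tendsto (fun t : ℝ => Matrix.of fun i j => ((t ^ (φ i - φ j) : ℝ) : ℂ) * C.val i j)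
          (nhdsWithin 0 (Set.Ioi 0)) (nhds L)) ↔
      (∀ i j, C.val i j ≠ 0 → (∃ m : ℤ, τ i - τ j = (m : ℝ)) ∧ φ j ≤ φ i)) ∧
    ((C.val * E = E * C.val ∧
      ∃ L : Matrix (Fin n) (Fin n) ℂ,
        Tendsto (fun t : ℝ => Matrix.of fun i j => ((t ^ (φ i - φ j) : ℝ) : ℂ) * C.val i j)
          (nhdsWithin 0 (Set.Ioi 0)) (nhds L)) ↔
      (C.val * E = E * C.val ∧ C ∈ parabolicSet n φ)) :=
  parahoric_membership_criterion_general τ φ E hE C.val
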